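/- arXiv:1506.07560 — 2 statements merged into one kernel-verified Lean document; each statement's English description precedes it below -/
import Mathlib

section
/- If 0 < τ < 1/3, then for each integer N ≥ 2 there exists a unique k_N > 0 such that m(k_N) = m(N·k_N); moreover the sequence (k_N) is strictly decreasing in N and k_N → 0 as N → ∞. -/
open Real Filter

/-- The capillary Whitham symbol `m(z) = √(gd(1 + τ z²) tanh z / z)`, `m(0) = √(gd)`,
with `τ = T/(g d²)`. -/
noncomputable def mW (g d T : ℝ) (z : ℝ) : ℝ :=
  if z = 0 then Real.sqrt (g * d)
  else Real.sqrt (g * d * (1 + T / (g * d ^ 2) * z ^ 2) * Real.tanh z / z)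

/-!
On `(0, ∞)` the square of the symbol is a multiple of `F(z) = (1 + τ z²) tanh z / z`, and the sign
of `F'(z)` is that of `τ - G(z)` for a function `G` independent of `τ`. Wilker's inequality for
hyperbolic functions says exactly that `G` is strictly decreasing; its limits at `0` and `∞` are
`1/3` and `0`. So for `0 < τ < 1/3` the function `F` decreases up to a point `z₀` and increases
afterwards.

For such a function the inequality `F(k) ≤ F(ck)` with `c > 1` forces `z₀ < ck`, hence it persists,
strictly, when `k` or `c` is increased. The solution of `F(k) = F(ck)` is therefore unique and
decreases with `c`, and it lies below any given `ε` once `F(ε) < F(cε)`, which holds for large `c`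
as `F → ∞`.
-/

open Set Topology

section StrictValley

/-- `f` strictly decreases on `(a, z]` and strictly increases on `[z, ∞)`. The left end `a` is
excluded so that nothing is asked of the value of `f` there. -/
structure IsStrictValley {α β : Type*} [Preorder α] [Preorder β] (f : α → β) (a z : α) : Prop where
  strictAntiOn : StrictAntiOn f (Ioc a z)
  strictMonoOn : StrictMonoOn f (Ici z)

namespace IsStrictValley

theorem lt_of_apply_le {α β : Type*} [LinearOrder α] [Preorder β] {f : α → β} {a z k p : α}
    (hf : IsStrictValley f a z) (hk : a < k) (hkp : k < p) (h : f k ≤ f p) : z < p := by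
  by_contra! hp
  exact h.not_gt (hf.strictAntiOn ⟨hk, hkp.le.trans hp⟩ ⟨hk.trans hkp, hp⟩ hkp)

section Dilation

variable {α β : Type*} [Semiring α] [LinearOrder α] [IsStrictOrderedRing α] [Preorder β]
  {f : α → β} {z c k : α}

theorem apply_lt_apply_mul_of_lt {l : α} (hf : IsStrictValley f 0 z) (hc : 1 < c) (hk : 0 < k)
    (hkl : k < l) (h : f k ≤ f (c * k)) : f l < f (c * l) := by
  have hc₀ : 0 < c := zero_lt_one.trans hc
  have hl : 0 < l := hk.trans hkl
  rcases le_total l z with hlz | hzl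
  · have hz : z < c * k := hf.lt_of_apply_le hk (lt_mul_of_one_lt_left hk hc) h
    have hckl : c * k < c * l := mul_lt_mul_of_pos_left hkl hc₀
    calc f l < f k := hf.strictAntiOn ⟨hk, hkl.le.trans hlz⟩ ⟨hl, hlz⟩ hkl
      _ ≤ f (c * k) := h
      _ < f (c * l) := hf.strictMonoOn hz.le (hz.trans hckl).le hckl
  · have hlcl : l < c * l := lt_mul_of_one_lt_left hl hc
    exact hf.strictMonoOn hzl (hzl.trans hlcl.le) hlcl

theorem apply_lt_apply_mul_of_factor_lt {c' : α} (hf : IsStrictValley f 0 z) (hc : 1 < c)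
    (hcc' : c < c') (hk : 0 < k) (h : f k ≤ f (c * k)) : f k < f (c' * k) := by
  have hz : z < c * k := hf.lt_of_apply_le hk (lt_mul_of_one_lt_left hk hc) h
  have hck : c * k < c' * k := mul_lt_mul_of_pos_right hcc' hk
  exact h.trans_lt (hf.strictMonoOn hz.le (hz.trans hck).le hck)

theorem lt_of_apply_lt_apply_mul {l : α} (hf : IsStrictValley f 0 z) (hc : 1 < c)
    (hl : 0 < l) (hk : f k = f (c * k)) (h : f l < f (c * l)) : k < l := by
  by_contra! hlk
  rcases hlk.eq_or_lt with rfl | hlk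
  · exact h.ne hk
  · exact (hf.apply_lt_apply_mul_of_lt hc hl hlk h.le).ne hk

theorem eq_of_apply_eq_apply_mul {l : α} (hf : IsStrictValley f 0 z) (hc : 1 < c) (hk : 0 < k)
    (hl : 0 < l) (hk' : f k = f (c * k)) (hl' : f l = f (c * l)) : k = l := by
  rcases lt_trichotomy k l with h | h | h
  · exact absurd hl' (hf.apply_lt_apply_mul_of_lt hc hk h hk'.le).ne
  · exact h
  · exact absurd hk' (hf.apply_lt_apply_mul_of_lt hc hl h hl'.le).ne

end Dilation

variable {f : ℝ → ℝ} {z : ℝ}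

theorem exists_apply_eq_apply_mul {c : ℝ} (hf : IsStrictValley f 0 z)
    (hcont : ContinuousOn f (Ioi 0)) (hz : 0 < z) (hc : 1 < c) :
    ∃ k, 0 < k ∧ f k = f (c * k) := by
  have hc₀ : 0 < c := zero_lt_one.trans hc
  have hzc : 0 < z / c := div_pos hz hc₀
  have hzc_lt : z / c < z := div_lt_self hz hc
  have hlt_cz : z < c * z := lt_mul_of_one_lt_left hz hc
  have hright : f z ≤ f (c * z) := (hf.strictMonoOn self_mem_Ici hlt_cz.le hlt_cz).le
  have hleft : f (c * (z / c)) ≤ f (z / c) := by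
    rw [mul_div_cancel₀ z hc₀.ne']
    exact (hf.strictAntiOn ⟨hzc, hzc_lt.le⟩ ⟨hz, le_rfl⟩ hzc_lt).le
  have hcont_mul : ContinuousOn (fun k ↦ f (c * k)) (Ioi 0) :=
    hcont.comp (by fun_prop) fun k hk ↦ mul_pos hc₀ hk
  exact isPreconnected_Ioi.intermediate_value₂ (mem_Ioi.2 hz) (mem_Ioi.2 hzc) hcont hcont_mul
    hright hleft

theorem exists_strictAntiOn_apply_eq_apply_mul (hf : IsStrictValley f 0 z)
    (hcont : ContinuousOn f (Ioi 0)) (hz : 0 < z) (htop : Tendsto f atTop atTop) :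
    ∃ κ : ℝ → ℝ,
      (∀ c, 1 < c → 0 < κ c ∧ f (κ c) = f (c * κ c) ∧
        ∀ k, 0 < k → f k = f (c * k) → k = κ c) ∧
      StrictAntiOn κ (Ioi 1) ∧ Tendsto κ atTop (𝓝 0) := by
  choose! κ hpos heq using fun c (hc : 1 < c) ↦ hf.exists_apply_eq_apply_mul hcont hz hc
  refine ⟨κ, fun c hc ↦ ⟨hpos c hc, heq c hc, fun k hk h ↦ ?_⟩, fun c hc c' hc' hcc' ↦ ?_,
    tendsto_order.2 ⟨fun b hb ↦ ?_, fun ε hε ↦ ?_⟩⟩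
  · exact hf.eq_of_apply_eq_apply_mul hc hk (hpos c hc) h (heq c hc)
  · exact hf.lt_of_apply_lt_apply_mul hc' (hpos c hc) (heq c' hc')
      (hf.apply_lt_apply_mul_of_factor_lt hc hcc' (hpos c hc) (heq c hc).le)
  · filter_upwards [eventually_gt_atTop 1] with c hc using hb.trans (hpos c hc)
  · have hmul : Tendsto (fun c ↦ f (c * ε)) atTop atTop :=
      htop.comp (tendsto_id.atTop_mul_const hε)
    filter_upwards [eventually_gt_atTop 1, hmul.eventually_gt_atTop (f ε)] with c hc h
    exact hf.lt_of_apply_lt_apply_mul hc hε (heq c hc) h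

end IsStrictValley

end StrictValley

section Hyperbolic

theorem lt_of_forall_hasDerivAt_lt {f g f' g' : ℝ → ℝ} {a x : ℝ}
    (hf : ∀ y, a ≤ y → HasDerivAt f (f' y) y) (hg : ∀ y, a ≤ y → HasDerivAt g (g' y) y)
    (hlt : ∀ y, a < y → f' y < g' y) (ha : f a ≤ g a) (hx : a < x) : f x < g x := by
  have hsub : ∀ y, a ≤ y → HasDerivAt (fun y ↦ g y - f y) (g' y - f' y) y :=
    fun y hy ↦ (hg y hy).sub (hf y hy)
  have hmono : StrictMonoOn (fun y ↦ g y - f y) (Ici a) := by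
    refine strictMonoOn_of_hasDerivWithinAt_pos (f' := fun y ↦ g' y - f' y) (convex_Ici a)
      (fun y hy ↦ (hsub y hy).continuousAt.continuousWithinAt) ?_ ?_ <;> rw [interior_Ici]
    · exact fun y hy ↦ (hsub y (le_of_lt hy)).hasDerivWithinAt
    · exact fun y hy ↦ sub_pos.2 (hlt y hy)
  have h : g a - f a < g x - f x := hmono self_mem_Ici hx.le hx
  linarith

theorem hasDerivAt_tanh (x : ℝ) : HasDerivAt tanh (1 - tanh x ^ 2) x := by
  have h := (hasDerivAt_sinh x).div (hasDerivAt_cosh x) (cosh_pos x).ne'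
  have htanh : tanh = sinh / cosh := funext tanh_eq_sinh_div_cosh
  rw [htanh]
  refine h.congr_deriv ?_
  rw [Pi.div_apply]
  have := cosh_pos x
  field_simp

theorem tanh_strictMono : StrictMono tanh :=
  strictMono_of_hasDerivAt_pos hasDerivAt_tanh fun x ↦ sub_pos.2 (tanh_sq_lt_one x)

variable {x : ℝ}

theorem tanh_pos (hx : 0 < x) : 0 < tanh x :=
  tanh_zero ▸ tanh_strictMono hx

theorem tanh_lt_self (hx : 0 < x) : tanh x < x := by
  refine lt_of_forall_hasDerivAt_lt (fun y _ ↦ hasDerivAt_tanh y) (fun y _ ↦ hasDerivAt_id y)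
    (fun y hy ↦ ?_) tanh_zero.le hx
  have : 0 < tanh y ^ 2 := pow_pos (tanh_pos hy) 2
  linarith

theorem self_sub_cube_div_three_lt_tanh (hx : 0 < x) : x - x ^ 3 / 3 < tanh x := by
  refine lt_of_forall_hasDerivAt_lt (f := fun y ↦ y - y ^ 3 / 3) (f' := fun y ↦ 1 - y ^ 2)
    (fun y _ ↦ ?_) (fun y _ ↦ hasDerivAt_tanh y) (fun y hy ↦ ?_) (by simp) hx
  · exact ((hasDerivAt_id y).sub ((hasDerivAt_pow 3 y).div_const 3)).congr_deriv (by ring)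
  · have : tanh y ^ 2 < y ^ 2 := pow_lt_pow_left₀ (tanh_lt_self hy) (tanh_pos hy).le two_ne_zero
    linarith

theorem one_add_sq_div_two_lt_cosh (hx : x ≠ 0) : 1 + x ^ 2 / 2 < cosh x := by
  have hhalf : (x / 2) ^ 2 < sinh (x / 2) ^ 2 := by
    rw [sq_lt_sq, abs_sinh]
    exact self_lt_sinh_iff.2 (abs_pos.2 (div_ne_zero hx two_ne_zero))
  calc 1 + x ^ 2 / 2 = 1 + 2 * (x / 2) ^ 2 := by ring
    _ < 1 + 2 * sinh (x / 2) ^ 2 := by gcongr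
    _ = cosh (2 * (x / 2)) := by rw [cosh_two_mul, cosh_sq]; ring
    _ = cosh x := by rw [mul_div_cancel₀ x two_ne_zero]

theorem self_add_cube_div_six_lt_sinh (hx : 0 < x) : x + x ^ 3 / 6 < sinh x := by
  refine lt_of_forall_hasDerivAt_lt (f := fun y ↦ y + y ^ 3 / 6) (f' := fun y ↦ 1 + y ^ 2 / 2)
    (fun y _ ↦ ?_) (fun y _ ↦ hasDerivAt_sinh y)
    (fun y hy ↦ one_add_sq_div_two_lt_cosh hy.ne') (by simp) hx
  exact ((hasDerivAt_id y).add ((hasDerivAt_pow 3 y).div_const 6)).congr_deriv (by ring)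

/-- The hyperbolic **Wilker inequality** `2 < (sinh x / x) ^ 2 + tanh x / x`, cleared of
denominators. -/
theorem two_mul_sq_lt_sinh_sq_add_mul_tanh (hx : 0 < x) :
    2 * x ^ 2 < sinh x ^ 2 + x * tanh x := by
  have hsinh : (x + x ^ 3 / 6) ^ 2 < sinh x ^ 2 :=
    pow_lt_pow_left₀ (self_add_cube_div_six_lt_sinh hx) (by positivity) two_ne_zero
  have htanh : x * (x - x ^ 3 / 3) < x * tanh x :=
    mul_lt_mul_of_pos_left (self_sub_cube_div_three_lt_tanh hx) hx
  calc 2 * x ^ 2 ≤ (x + x ^ 3 / 6) ^ 2 + x * (x - x ^ 3 / 3) := by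
        nlinarith [sq_nonneg (x ^ 3)]
    _ < sinh x ^ 2 + x * tanh x := add_lt_add hsinh htanh

end Hyperbolic

section CriticalBond

/-- The Bond number `τ` for which `z` is a critical point of `(1 + τ z²) tanh z / z`. -/
noncomputable def criticalBond (z : ℝ) : ℝ :=
  (sinh z * cosh z - z) / (z ^ 2 * (sinh z * cosh z + z))

variable {z : ℝ}

theorem hasDerivAt_criticalBond (hz : 0 < z) :
    HasDerivAt criticalBond
      (-(2 * z * cosh z ^ 2 * (sinh z ^ 2 + z * tanh z - 2 * z ^ 2)) /
        (z ^ 2 * (sinh z * cosh z + z)) ^ 2) z := by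
  have hsc := (hasDerivAt_sinh z).mul (hasDerivAt_cosh z)
  have hden : z ^ 2 * (sinh z * cosh z + z) ≠ 0 := by positivity
  have h := (hsc.sub (hasDerivAt_id z)).div ((hasDerivAt_pow 2 z).mul (hsc.add (hasDerivAt_id z)))
    hden
  refine h.congr_deriv ?_
  simp only [Pi.mul_apply, Pi.add_apply, Pi.sub_apply, id, tanh_eq_sinh_div_cosh]
  congr 1
  field_simp
  linear_combination -2 * z ^ 3 * cosh_sq z

theorem strictAntiOn_criticalBond : StrictAntiOn criticalBond (Ioi 0) := by
  refine strictAntiOn_of_deriv_neg (convex_Ioi 0)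
    (fun y hy ↦ (hasDerivAt_criticalBond hy).continuousAt.continuousWithinAt) fun y hy ↦ ?_
  rw [interior_Ioi] at hy
  have hy₀ : 0 < y := hy
  have hwilker : 0 < sinh y ^ 2 + y * tanh y - 2 * y ^ 2 :=
    sub_pos.2 (two_mul_sq_lt_sinh_sq_add_mul_tanh hy)
  rw [(hasDerivAt_criticalBond hy).deriv]
  exact div_neg_of_neg_of_pos (neg_neg_of_pos (by positivity)) (by positivity)

theorem criticalBond_lt_inv_sq (hz : 0 < z) : criticalBond z < (z ^ 2)⁻¹ := by
  rw [criticalBond, div_lt_iff₀ (by positivity), inv_mul_cancel_left₀ (by positivity)]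
  linarith

theorem lt_criticalBond (hz : 0 < z) : 2 / (3 * (cosh z ^ 2 + 1)) < criticalBond z := by
  have hsinh : sinh z < z * cosh z := by
    have h := tanh_lt_self hz
    rwa [tanh_eq_sinh_div_cosh, div_lt_iff₀ (cosh_pos z)] at h
  have hden : sinh z * cosh z + z < z * (cosh z ^ 2 + 1) := by
    nlinarith [mul_lt_mul_of_pos_right hsinh (cosh_pos z)]
  have hnum : 2 / 3 * z ^ 3 < sinh z * cosh z - z := by
    have h := self_add_cube_div_six_lt_sinh (x := 2 * z) (by positivity)
    rw [sinh_two_mul] at h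
    linarith
  calc 2 / (3 * (cosh z ^ 2 + 1)) = 2 / 3 * z ^ 3 / (z ^ 2 * (z * (cosh z ^ 2 + 1))) := by
        field_simp
    _ < (sinh z * cosh z - z) / (z ^ 2 * (sinh z * cosh z + z)) :=
        div_lt_div₀ hnum (by gcongr) ((by positivity : 0 < 2 / 3 * z ^ 3).trans hnum).le
          (by positivity)

theorem exists_criticalBond_eq {τ : ℝ} (hτ₀ : 0 < τ) (hτ₁ : τ < 1 / 3) :
    ∃ z, 0 < z ∧ criticalBond z = τ := by
  obtain ⟨a, ha, hτa⟩ : ∃ a, 0 < a ∧ τ < criticalBond a := by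
    have hcosh : 1 < √(2 / (3 * τ) - 1) := by
      rw [lt_sqrt zero_le_one, one_pow, lt_sub_iff_add_lt, lt_div_iff₀ (by positivity)]
      linarith
    have ha : 0 < arcosh √(2 / (3 * τ) - 1) := arcosh_pos hcosh
    refine ⟨_, ha, lt_of_eq_of_lt ?_ (lt_criticalBond ha)⟩
    rw [cosh_arcosh hcosh.le, sq_sqrt (sqrt_pos.1 (one_pos.trans hcosh)).le]
    field_simp
    ring
  obtain ⟨b, hb, hbτ⟩ : ∃ b, 0 < b ∧ criticalBond b < τ := by
    refine ⟨(√τ)⁻¹, by positivity, ?_⟩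
    simpa only [inv_pow, sq_sqrt hτ₀.le, inv_inv] using
      criticalBond_lt_inv_sq (inv_pos.2 (sqrt_pos.2 hτ₀))
  have hcont : ContinuousOn criticalBond (Ioi 0) :=
    fun y hy ↦ (hasDerivAt_criticalBond hy).continuousAt.continuousWithinAt
  exact isPreconnected_Ioi.intermediate_value (mem_Ioi.2 hb) (mem_Ioi.2 ha) hcont
    ⟨hbτ.le, hτa.le⟩

end CriticalBond

section WhithamProfile

/-- The square of the capillary Whitham symbol on `(0, ∞)`, normalised by `g d`. -/
noncomputable def whithamProfile (τ z : ℝ) : ℝ :=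
  (1 + τ * z ^ 2) * tanh z / z

variable {τ z : ℝ}

theorem whithamProfile_pos (hτ : 0 ≤ τ) (hz : 0 < z) : 0 < whithamProfile τ z := by
  have := tanh_pos hz
  unfold whithamProfile
  positivity

theorem hasDerivAt_whithamProfile (τ : ℝ) (hz : 0 < z) :
    HasDerivAt (whithamProfile τ)
      ((τ - criticalBond z) * ((sinh z * cosh z + z) / cosh z ^ 2)) z := by
  have h := ((((hasDerivAt_pow 2 z).const_mul τ).const_add 1).mul (hasDerivAt_tanh z)).div
    (hasDerivAt_id z) hz.ne'
  refine h.congr_deriv ?_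
  have hden : sinh z * cosh z + z ≠ 0 := by positivity
  simp only [Pi.mul_apply, id, criticalBond, tanh_eq_sinh_div_cosh]
  field_simp
  linear_combination z * (1 + τ * z ^ 2) * cosh_sq z

theorem continuousOn_whithamProfile (τ : ℝ) : ContinuousOn (whithamProfile τ) (Ioi 0) :=
  fun _ hz ↦ (hasDerivAt_whithamProfile τ hz).continuousAt.continuousWithinAt

theorem isStrictValley_whithamProfile (hz : 0 < z) :
    IsStrictValley (whithamProfile (criticalBond z)) 0 z where
  strictAntiOn := by
    refine strictAntiOn_of_deriv_neg (convex_Ioc 0 z)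
      ((continuousOn_whithamProfile _).mono fun y hy ↦ hy.1) fun y hy ↦ ?_
    rw [interior_Ioc] at hy
    have hy₀ : 0 < y := hy.1
    rw [(hasDerivAt_whithamProfile _ hy₀).deriv]
    exact mul_neg_of_neg_of_pos (sub_neg.2 (strictAntiOn_criticalBond hy₀ hz hy.2))
      (by positivity)
  strictMonoOn := by
    refine strictMonoOn_of_deriv_pos (convex_Ici z)
      ((continuousOn_whithamProfile _).mono fun y hy ↦ hz.trans_le hy) fun y hy ↦ ?_
    rw [interior_Ici] at hy
    have hy₀ : 0 < y := hz.trans hy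
    rw [(hasDerivAt_whithamProfile _ hy₀).deriv]
    exact mul_pos (sub_pos.2 (strictAntiOn_criticalBond hz hy₀ hy)) (by positivity)

theorem tendsto_whithamProfile_atTop (hτ : 0 < τ) : Tendsto (whithamProfile τ) atTop atTop := by
  have htanh_one : 0 < tanh 1 := tanh_pos one_pos
  refine tendsto_atTop_mono' _ ?_ (tendsto_id.const_mul_atTop (mul_pos hτ htanh_one))
  filter_upwards [eventually_ge_atTop 1] with z hz
  have hz₀ : 0 < z := one_pos.trans_le hz
  have htanh : tanh 1 ≤ tanh z := tanh_strictMono.monotone hz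
  rw [whithamProfile, le_div_iff₀ hz₀]
  calc τ * tanh 1 * z * z = τ * z ^ 2 * tanh 1 := by ring
    _ ≤ (1 + τ * z ^ 2) * tanh z := by gcongr; linarith

theorem mW_eq_sqrt_whithamProfile (g d T : ℝ) (hz : z ≠ 0) :
    mW g d T z = √(g * d * whithamProfile (T / (g * d ^ 2)) z) := by
  rw [mW, if_neg hz, whithamProfile, mul_assoc (g * d), mul_div_assoc (g * d)]

theorem mW_eq_mW_iff {g d T w : ℝ} (hgd : 0 < g * d) (hτ : 0 ≤ T / (g * d ^ 2))
    (hz : 0 < z) (hw : 0 < w) :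
    mW g d T z = mW g d T w ↔
      whithamProfile (T / (g * d ^ 2)) z = whithamProfile (T / (g * d ^ 2)) w := by
  rw [mW_eq_sqrt_whithamProfile g d T hz.ne', mW_eq_sqrt_whithamProfile g d T hw.ne',
    sqrt_inj (mul_pos hgd (whithamProfile_pos hτ hz)).le
      (mul_pos hgd (whithamProfile_pos hτ hw)).le,
    mul_right_inj' hgd.ne']

end WhithamProfile

theorem whitham_symbol_resonant_wavenumbers_general (g d T : ℝ) (hgd : 0 < g * d)
    (hτ0 : 0 < T / (g * d ^ 2)) (hτ1 : T / (g * d ^ 2) < 1 / 3) :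
    ∃ κ : ℝ → ℝ,
      (∀ c : ℝ, 1 < c →
        0 < κ c ∧ mW g d T (κ c) = mW g d T (c * κ c) ∧
        ∀ k : ℝ, 0 < k → mW g d T k = mW g d T (c * k) → k = κ c) ∧
      StrictAntiOn κ (Ioi 1) ∧
      Tendsto κ atTop (𝓝 0) := by
  obtain ⟨z, hz, hzτ⟩ := exists_criticalBond_eq hτ0 hτ1
  have hvalley : IsStrictValley (whithamProfile (T / (g * d ^ 2))) 0 z :=
    hzτ ▸ isStrictValley_whithamProfile hz
  obtain ⟨κ, hκ, hanti, hlim⟩ := hvalley.exists_strictAntiOn_apply_eq_apply_mul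
    (continuousOn_whithamProfile _) hz (tendsto_whithamProfile_atTop hτ0)
  have hiff : ∀ c k : ℝ, 1 < c → 0 < k → (mW g d T k = mW g d T (c * k) ↔
      whithamProfile (T / (g * d ^ 2)) k = whithamProfile (T / (g * d ^ 2)) (c * k)) :=
    fun c k hc hk ↦ mW_eq_mW_iff hgd hτ0.le hk (mul_pos (one_pos.trans hc) hk)
  refine ⟨κ, fun c hc ↦ ?_, hanti, hlim⟩
  obtain ⟨hpos, heq, huniq⟩ := hκ c hc
  exact ⟨hpos, (hiff c _ hc hpos).2 heq, fun k hk h ↦ huniq k hk ((hiff c k hc hk).1 h)⟩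

/-- if `0 < τ < 1/3`, for each integer `N ≥ 2` there is a unique `k_N > 0`
with `m(k_N) = m(N k_N)`; the sequence `(k_N)` is strictly decreasing and `k_N → 0`. -/
theorem whitham_symbol_resonant_wavenumbers (g d T : ℝ)
    (hg : 0 < g) (hd : 0 < d)
    (hτ0 : 0 < T / (g * d ^ 2)) (hτ1 : T / (g * d ^ 2) < 1 / 3) :
    ∃ kseq : ℕ → ℝ,
      (∀ N : ℕ, 2 ≤ N →
        0 < kseq N ∧ mW g d T (kseq N) = mW g d T (N * kseq N) ∧
        ∀ k : ℝ, 0 < k → mW g d T k = mW g d T (N * k) → k = kseq N) ∧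
      (∀ M N : ℕ, 2 ≤ M → M < N → kseq N < kseq M) ∧
      Tendsto kseq atTop (nhds 0) := by
  obtain ⟨κ, hκ, hanti, hlim⟩ :=
    whitham_symbol_resonant_wavenumbers_general g d T (mul_pos hg hd) hτ0 hτ1
  have hcast : ∀ N : ℕ, 2 ≤ N → (N : ℝ) ∈ Ioi 1 := fun _ hN ↦ mem_Ioi.2 (Nat.one_lt_cast.2 hN)
  exact ⟨fun N ↦ κ N, fun N hN ↦ hκ N (hcast N hN),
    fun M N hM hMN ↦ hanti (hcast M hM) (hcast N (hM.trans hMN.le)) (Nat.cast_lt.2 hMN),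
    hlim.comp tendsto_natCast_atTop_atTop⟩
end

section
/- If τ > 1/3, then the group velocity z ↦ (z·m(z))' is strictly increasing on (0, ∞) and satisfies (z·m(z))' > m(0) = √(gd) for every z > 0; in particular the group velocity has no critical points on (0, ∞) and never coincides with the long-wave phase speed m(0). -/
open Real Filter

/-!
The group velocity is `c_g = m ρ`, where `ρ(z) = 3/2 - 1/(1 + τ z²) + z / sinh 2z`, and
`c_g' = (m / z) (ρ (ρ - 1) + z ρ')`. Both `ρ` and `ρ (ρ - 1) + z ρ'` decrease in the variable
`1/(1 + τ z²)`, so it suffices to bound them at the critical tension `τ = 1/3`. There, clearing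
denominators leaves inequalities between polynomials and hyperbolic functions, whose two sides
differ by an even power series with nonnegative coefficients from the eighth order on; the finitely
many lower terms are compared by hand. The bound `√(gd) < m` is of the same kind, and with `1 < ρ`
it gives `√(gd) < c_g`.
-/

open scoped Nat

theorem add_descFactorial_mul_pow_div_factorial (x : ℝ) (m k : ℕ) :
    (m + k).descFactorial k * (x ^ (m + k) / (m + k)!) = x ^ k * (x ^ m / m !) := by
  have hfactorial := Nat.factorial_mul_descFactorial (Nat.le_add_left k m)
  rw [Nat.add_sub_cancel] at hfactorial
  have hne : ((m + k).descFactorial k : ℝ) ≠ 0 := by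
    simp [Nat.descFactorial_eq_zero_iff_lt]
  rw [← hfactorial, Nat.cast_mul, pow_add]
  field_simp

theorem hasSum_descFactorial_mul_of_parity {x A : ℝ} {i : ℕ} (hi : i ≤ 1) (k : ℕ)
    (h : HasSum (fun n : ℕ ↦ x ^ (2 * n + i) / (2 * n + i)!) A) :
    HasSum (fun n : ℕ ↦ (2 * n).descFactorial (2 * k + i) * (x ^ (2 * n) / (2 * n)!))
      (x ^ (2 * k + i) * A) := by
  have hlow : ∑ n ∈ Finset.range (k + i),
      ((2 * n).descFactorial (2 * k + i) : ℝ) * (x ^ (2 * n) / (2 * n)!) = 0 :=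
    Finset.sum_eq_zero fun n hn ↦ by
      have hlt : 2 * n < 2 * k + i := by have := Finset.mem_range.1 hn; lia
      rw [Nat.descFactorial_of_lt hlt, Nat.cast_zero, zero_mul]
  have hindex (n : ℕ) : 2 * (n + (k + i)) = 2 * n + i + (2 * k + i) := by ring
  rw [← hasSum_nat_add_iff' (k + i), hlow, sub_zero]
  simpa only [hindex, add_descFactorial_mul_pow_div_factorial] using h.mul_left (x ^ (2 * k + i))

theorem hasSum_pow_mul_cosh (k : ℕ) (x : ℝ) :
    HasSum (fun n : ℕ ↦ (2 * n).descFactorial (2 * k) * (x ^ (2 * n) / (2 * n)!))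
      (x ^ (2 * k) * cosh x) :=
  hasSum_descFactorial_mul_of_parity zero_le_one k (hasSum_cosh x)

theorem hasSum_pow_mul_sinh (k : ℕ) (x : ℝ) :
    HasSum (fun n : ℕ ↦ (2 * n).descFactorial (2 * k + 1) * (x ^ (2 * n) / (2 * n)!))
      (x ^ (2 * k + 1) * sinh x) :=
  hasSum_descFactorial_mul_of_parity le_rfl k (hasSum_sinh x)

theorem sum_range_le_of_hasSum_even {c : ℕ → ℝ} {x A : ℝ} (N : ℕ) (hc : ∀ n, N ≤ n → 0 ≤ c n)
    (h : HasSum (fun n : ℕ ↦ c n * (x ^ (2 * n) / (2 * n)!)) A) :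
    ∑ n ∈ Finset.range N, c n * (x ^ (2 * n) / (2 * n)!) ≤ A :=
  sum_le_hasSum _ (fun n hn ↦ mul_nonneg (hc n (by simpa using hn))
    (div_nonneg ((even_two_mul n).pow_nonneg x) (Nat.cast_nonneg _))) h

theorem mul_cosh_lt_one_add_sq_div_three_mul_sinh {x : ℝ} (hx : 0 < x) :
    x * cosh x < (1 + x ^ 2 / 3) * sinh x := by
  have hsum : HasSum (fun n : ℕ ↦ (8 / 3 * (n * (n - 1) * (n - 2)) : ℝ) *
      (x ^ (2 * n) / (2 * n)!)) (x * sinh x + 1 / 3 * (x ^ 3 * sinh x) - x ^ 2 * cosh x) := by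
    convert ((hasSum_pow_mul_sinh 0 x).add ((hasSum_pow_mul_sinh 1 x).mul_left (1 / 3))).add
      ((hasSum_pow_mul_cosh 1 x).mul_left (-1)) using 1
    · funext n
      simp only [← descPochhammer_eval_eq_descFactorial ℝ, descPochhammer_succ_eval,
        descPochhammer_zero, Polynomial.eval_one, mul_zero]
      push_cast
      ring
    · ring
  have hcoeff (n : ℕ) (hn : 4 ≤ n) : (0 : ℝ) ≤ 8 / 3 * (n * (n - 1) * (n - 2)) := by
    obtain ⟨k, rfl⟩ := Nat.exists_eq_add_of_le' hn
    push_cast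
    ring_nf
    positivity
  have hle := sum_range_le_of_hasSum_even 4 hcoeff hsum
  have hx6 : 0 < x ^ 6 := by positivity
  norm_num [Finset.sum_range_succ, Nat.factorial] at hle
  nlinarith

theorem twelve_sub_sq_mul_sinh_lt {w : ℝ} (hw : 0 < w) :
    (12 - w ^ 2) * sinh w < w * (12 + w ^ 2) := by
  have hsum : HasSum (fun n : ℕ ↦ (4 * (n * (n + 1) * (2 * n - 5)) : ℝ) *
      (w ^ (2 * n) / (2 * n)!)) (w ^ 3 * sinh w - 12 * (w * sinh w)) := by
    convert (hasSum_pow_mul_sinh 1 w).add ((hasSum_pow_mul_sinh 0 w).mul_left (-12)) using 1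
    · funext n
      simp only [← descPochhammer_eval_eq_descFactorial ℝ, descPochhammer_succ_eval,
        descPochhammer_zero, Polynomial.eval_one, mul_zero]
      push_cast
      ring
    · ring
  have hcoeff (n : ℕ) (hn : 4 ≤ n) : (0 : ℝ) ≤ 4 * (n * (n + 1) * (2 * n - 5)) := by
    obtain ⟨k, rfl⟩ := Nat.exists_eq_add_of_le' hn
    push_cast
    ring_nf
    positivity
  have hle := sum_range_le_of_hasSum_even 4 hcoeff hsum
  have hw6 : 0 < w ^ 6 := by positivity
  norm_num [Finset.sum_range_succ, Nat.factorial] at hle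
  nlinarith

/-- The coefficient of `w ^ (2 * n) / (2 * n)!` in the even power series that decides the sign of
`c_g'` at the critical tension, with `w = 2 z`. The factor `4 ^ n` comes from
`sinh w ^ 2 = (cosh (2 * w) - 1) / 2`. -/
noncomputable def convexityCoeff (n : ℕ) : ℝ :=
  4 ^ n * (3 / 32 * (2 * n).descFactorial 4 + 9 * (2 * n).descFactorial 2 - 72)
    + 6 * (2 * n).descFactorial 5 + 96 * (2 * n).descFactorial 3 + 288 * (2 * n).descFactorial 1
    - 2 * (2 * n).descFactorial 6 - 48 * (2 * n).descFactorial 4 - 288 * (2 * n).descFactorial 2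

theorem sq_succ_le_four_pow (k : ℕ) : ((k : ℝ) + 1) ^ 2 ≤ 4 ^ k := by
  rw [show (4 : ℝ) = 2 ^ 2 by norm_num, pow_right_comm]
  gcongr
  exact_mod_cast k.lt_two_pow_self

theorem convexityCoeff_nonneg {n : ℕ} (hn : 4 ≤ n) : 0 ≤ convexityCoeff n := by
  obtain ⟨k, rfl⟩ := Nat.exists_eq_add_of_le' hn
  have hexp : convexityCoeff (k + 4) =
      4 ^ k * (384 * k ^ 4 + 4992 * k ^ 3 + 33312 * k ^ 2 + 120288 * k + 150912)
      - (128 * k ^ 6 + 1920 * k ^ 5 + 12128 * k ^ 4 + 42336 * k ^ 3 + 88832 * k ^ 2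
        + 109248 * k + 62208) := by
    simp only [convexityCoeff, ← descPochhammer_eval_eq_descFactorial ℝ, descPochhammer_succ_eval,
      descPochhammer_zero, Polynomial.eval_one]
    push_cast
    ring
  rw [hexp, sub_nonneg]
  refine le_trans ?_ (mul_le_mul_of_nonneg_right (sq_succ_le_four_pow k) (by positivity))
  rw [← sub_nonneg]
  ring_nf
  positivity

theorem hasSum_convexityCoeff (w : ℝ) :
    HasSum (fun n : ℕ ↦ convexityCoeff n * (w ^ (2 * n) / (2 * n)!))
      ((3 / 2 * w ^ 4 + 36 * w ^ 2 - 72) * cosh (2 * w)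
        + (6 * w ^ 5 + 96 * w ^ 3 + 288 * w) * sinh w
        - (2 * w ^ 6 + 48 * w ^ 4 + 288 * w ^ 2) * cosh w) := by
  have hdouble : HasSum (_ : ℕ → ℝ) _ := (((hasSum_pow_mul_cosh 2 (2 * w)).mul_left (3 / 32)).add
    ((hasSum_pow_mul_cosh 1 (2 * w)).mul_left 9)).add
    ((hasSum_pow_mul_cosh 0 (2 * w)).mul_left (-72))
  have hodd : HasSum (_ : ℕ → ℝ) _ := (((hasSum_pow_mul_sinh 2 w).mul_left 6).add
    ((hasSum_pow_mul_sinh 1 w).mul_left 96)).add ((hasSum_pow_mul_sinh 0 w).mul_left 288)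
  have heven : HasSum (_ : ℕ → ℝ) _ := (((hasSum_pow_mul_cosh 3 w).mul_left (-2)).add
    ((hasSum_pow_mul_cosh 2 w).mul_left (-48))).add ((hasSum_pow_mul_cosh 1 w).mul_left (-288))
  convert (hdouble.add hodd).add heven using 1
  · funext n
    have hfour : (2 * w) ^ (2 * n) = 4 ^ n * w ^ (2 * n) := by
      rw [mul_pow, pow_mul 2 2 n]
      norm_num
    rw [hfour, convexityCoeff]
    simp only [Nat.reduceMul, Nat.reduceAdd, Nat.descFactorial_zero, Nat.cast_one]
    ring
  · ring

/-- The case `τ = 1 / 3`, `w = 2 z` of `groupPhaseRatio_riccati_pos`, with denominators cleared. -/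
theorem critical_hyperbolic_inequality {w : ℝ} (hw : 0 < w) :
    48 * sinh w * (12 * sinh w + w * (12 + w ^ 2)) <
      (12 + w ^ 2) ^ 2 * (3 * sinh w ^ 2 + 6 * w * sinh w + w ^ 2 * (1 - 2 * cosh w)) := by
  have hle := sum_range_le_of_hasSum_even 4 (fun _ ↦ convexityCoeff_nonneg)
    (hasSum_convexityCoeff w)
  have hhead : ∑ n ∈ Finset.range 4, convexityCoeff n * (w ^ (2 * n) / (2 * n)!) =
      7 * w ^ 6 - 45 / 2 * w ^ 4 - 108 * w ^ 2 - 72 := by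
    norm_num [Finset.sum_range_succ, convexityCoeff, Nat.factorial, Nat.descFactorial]
    ring
  have hw6 : 0 < w ^ 6 := by positivity
  rw [hhead, cosh_two_mul, cosh_sq] at hle
  linarith

theorem hasDerivAt_tanh_s16 (z : ℝ) : HasDerivAt tanh (1 / cosh z ^ 2) z := by
  have hquot := (hasDerivAt_sinh z).div (hasDerivAt_cosh z) (cosh_pos z).ne'
  rw [← sq, ← sq, cosh_sq_sub_sinh_sq] at hquot
  exact hquot.congr_of_eventuallyEq (.of_forall tanh_eq_sinh_div_cosh)

theorem tanh_pos_of_pos {z : ℝ} (hz : 0 < z) : 0 < tanh z := by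
  rw [tanh_eq_sinh_div_cosh]
  exact div_pos (sinh_pos_iff.2 hz) (cosh_pos z)

/-- The ratio `c_g / m` of the group velocity to the phase velocity of capillary-gravity waves with
normalized surface tension `τ`, as a function of the wave number. -/
noncomputable def groupPhaseRatio (τ z : ℝ) : ℝ :=
  3 / 2 - 1 / (1 + τ * z ^ 2) + z / sinh (2 * z)

theorem one_lt_groupPhaseRatio {τ z : ℝ} (hτ : 1 / 3 ≤ τ) (hz : 0 < z) :
    1 < groupPhaseRatio τ z := by
  have hsinh : 0 < sinh (2 * z) := sinh_pos_iff.2 (by positivity)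
  have hτz : 1 / (1 + τ * z ^ 2) ≤ 1 / (1 + 1 / 3 * z ^ 2) := by gcongr
  have hcrit : 1 / (1 + 1 / 3 * z ^ 2) - 1 / 2 < z / sinh (2 * z) := by
    have h := twelve_sub_sq_mul_sinh_lt (w := 2 * z) (by positivity)
    generalize sinh (2 * z) = s at h hsinh ⊢
    rw [lt_div_iff₀ hsinh]
    field_simp
    linarith
  unfold groupPhaseRatio
  linarith

theorem hasDerivAt_groupPhaseRatio {τ z : ℝ} (hτ : 0 ≤ τ) (hz : 0 < z) :
    HasDerivAt (groupPhaseRatio τ)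
      (2 * τ * z / (1 + τ * z ^ 2) ^ 2
        + (sinh (2 * z) - 2 * z * cosh (2 * z)) / sinh (2 * z) ^ 2) z := by
  have hsinh : sinh (2 * z) ≠ 0 := (sinh_pos_iff.2 (by positivity)).ne'
  have hden : HasDerivAt (fun y ↦ 1 + τ * y ^ 2) (2 * τ * z) z :=
    (((hasDerivAt_pow 2 z).const_mul τ).const_add 1).congr_deriv (by norm_num; ring)
  have hsinh' : HasDerivAt (fun y ↦ sinh (2 * y)) (2 * cosh (2 * z)) z :=
    ((hasDerivAt_const_mul 2).sinh).congr_deriv (mul_comm _ _)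
  refine ((((hasDerivAt_const z (1 : ℝ)).div hden (by positivity)).const_sub (3 / 2)).add
    ((hasDerivAt_id z).div hsinh' hsinh)).congr_deriv ?_
  simp only [id_eq]
  ring

theorem critical_hyperbolic_inequality_div {w : ℝ} (hw : 0 < w) :
    4 * (12 / (12 + w ^ 2)) * (12 / (12 + w ^ 2) + w / sinh w) <
      3 + 6 * (w / sinh w) + (w / sinh w) ^ 2 * (1 - 2 * cosh w) := by
  have hsinh : 0 < sinh w := sinh_pos_iff.2 hw
  have h := critical_hyperbolic_inequality hw
  field_simp
  linarith

theorem groupPhaseRatio_riccati_eq {τ z : ℝ} (hτ : 0 ≤ τ) (hz : 0 < z) :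
    groupPhaseRatio τ z * (groupPhaseRatio τ z - 1) + z * deriv (groupPhaseRatio τ) z =
      (3 + 6 * (2 * z / sinh (2 * z)) + (2 * z / sinh (2 * z)) ^ 2 * (1 - 2 * cosh (2 * z))
        - 4 * (1 / (1 + τ * z ^ 2)) * (1 / (1 + τ * z ^ 2) + 2 * z / sinh (2 * z))) / 4 := by
  have hsinh : 0 < sinh (2 * z) := sinh_pos_iff.2 (by positivity)
  rw [(hasDerivAt_groupPhaseRatio hτ hz).deriv, groupPhaseRatio]
  generalize sinh (2 * z) = s at hsinh ⊢
  field_simp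
  ring

theorem groupPhaseRatio_riccati_pos {τ z : ℝ} (hτ : 1 / 3 ≤ τ) (hz : 0 < z) :
    0 < groupPhaseRatio τ z * (groupPhaseRatio τ z - 1) + z * deriv (groupPhaseRatio τ) z := by
  have hcrit := critical_hyperbolic_inequality_div (w := 2 * z) (by positivity)
  have hle : 1 / (1 + τ * z ^ 2) ≤ 12 / (12 + (2 * z) ^ 2) := by
    rw [div_le_div_iff₀ (by positivity) (by positivity)]
    nlinarith [sq_nonneg z]
  have hmono : 4 * (1 / (1 + τ * z ^ 2)) * (1 / (1 + τ * z ^ 2) + 2 * z / sinh (2 * z)) ≤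
      4 * (12 / (12 + (2 * z) ^ 2)) * (12 / (12 + (2 * z) ^ 2) + 2 * z / sinh (2 * z)) := by
    gcongr
  rw [groupPhaseRatio_riccati_eq (by linarith) hz]
  linarith

section Whitham

variable {g d T z : ℝ}

theorem hasDerivAt_mW (hgd : 0 < g * d) (hτ : 0 ≤ T / (g * d ^ 2)) (hz : 0 < z) :
    HasDerivAt (mW g d T) (mW g d T z * (groupPhaseRatio (T / (g * d ^ 2)) z - 1) / z) z := by
  set τ := T / (g * d ^ 2)
  set G : ℝ → ℝ := fun y ↦ g * d * (1 + τ * y ^ 2) * tanh y / y with hG_def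
  have htanh : 0 < tanh z := tanh_pos_of_pos hz
  have hGpos : 0 < G z := by positivity
  have hG : HasDerivAt G (2 * G z * (groupPhaseRatio τ z - 1) / z) z := by
    have hpoly : HasDerivAt (fun y ↦ g * d * (1 + τ * y ^ 2)) (g * d * (2 * τ * z)) z :=
      ((((hasDerivAt_pow 2 z).const_mul τ).const_add 1).const_mul (g * d)).congr_deriv
        (by push_cast; ring)
    refine ((hpoly.mul (hasDerivAt_tanh_s16 z)).div (hasDerivAt_id z) hz.ne').congr_deriv ?_
    have hsinh : sinh z ≠ 0 := (sinh_pos_iff.2 hz).ne'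
    simp only [hG_def, groupPhaseRatio, id_eq, sinh_two_mul, tanh_eq_sinh_div_cosh, Pi.mul_apply]
    field_simp
    ring
  have hmW : mW g d T =ᶠ[nhds z] fun y ↦ √(G y) := by
    filter_upwards [eventually_ne_nhds hz.ne'] with y hy
    exact if_neg hy
  refine ((hG.sqrt hGpos.ne').congr_of_eventuallyEq hmW).congr_deriv ?_
  rw [hmW.eq_of_nhds]
  have hsq := sq_sqrt hGpos.le
  field_simp
  rw [hsq]
  ring

theorem hasDerivAt_mul_mW (hgd : 0 < g * d) (hτ : 0 ≤ T / (g * d ^ 2)) (hz : 0 < z) :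
    HasDerivAt (fun y ↦ y * mW g d T y)
      (mW g d T z * groupPhaseRatio (T / (g * d ^ 2)) z) z := by
  refine ((hasDerivAt_id z).mul (hasDerivAt_mW hgd hτ hz)).congr_deriv ?_
  simp only [id_eq]
  field_simp
  ring

theorem hasDerivAt_deriv_mul_mW (hgd : 0 < g * d) (hτ : 0 ≤ T / (g * d ^ 2)) (hz : 0 < z) :
    HasDerivAt (deriv fun y ↦ y * mW g d T y)
      (mW g d T z / z * (groupPhaseRatio (T / (g * d ^ 2)) z *
        (groupPhaseRatio (T / (g * d ^ 2)) z - 1)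
          + z * deriv (groupPhaseRatio (T / (g * d ^ 2))) z)) z := by
  have hvelocity : (deriv fun y ↦ y * mW g d T y) =ᶠ[nhds z]
      fun y ↦ mW g d T y * groupPhaseRatio (T / (g * d ^ 2)) y := by
    filter_upwards [Ioi_mem_nhds hz] with y hy
    exact (hasDerivAt_mul_mW hgd hτ hy).deriv
  have hratio := (hasDerivAt_groupPhaseRatio hτ hz).differentiableAt.hasDerivAt
  refine (((hasDerivAt_mW hgd hτ hz).mul hratio).congr_of_eventuallyEq hvelocity).congr_deriv ?_
  field_simp

theorem sqrt_mul_lt_mW (hgd : 0 < g * d) (hτ : 1 / 3 ≤ T / (g * d ^ 2)) (hz : 0 < z) :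
    √(g * d) < mW g d T z := by
  have htanh : z < (1 + z ^ 2 / 3) * tanh z := by
    rw [tanh_eq_sinh_div_cosh, ← mul_div_assoc, lt_div_iff₀ (cosh_pos z)]
    exact mul_cosh_lt_one_add_sq_div_three_mul_sinh hz
  have hfactor : 1 < (1 + T / (g * d ^ 2) * z ^ 2) * tanh z / z := by
    rw [one_lt_div hz]
    refine htanh.trans_le (mul_le_mul_of_nonneg_right ?_ (tanh_pos_of_pos hz).le)
    nlinarith [sq_nonneg z]
  rw [mW, if_neg hz.ne', mul_assoc, mul_div_assoc]
  exact sqrt_lt_sqrt hgd.le (lt_mul_of_one_lt_right hgd hfactor)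

end Whitham

theorem capillary_whitham_group_velocity_large_tension_general (g d T : ℝ)
    (hg : 0 < g) (hd : 0 < d) (hτ : 1 / 3 ≤ T / (g * d ^ 2)) :
    mW g d T 0 = Real.sqrt (g * d) ∧
    StrictMonoOn (deriv fun z : ℝ => z * mW g d T z) (Set.Ioi 0) ∧
    (∀ z : ℝ, 0 < z → Real.sqrt (g * d) < deriv (fun z : ℝ => z * mW g d T z) z) ∧
    ∀ z : ℝ, 0 < z → 0 < deriv (deriv fun z : ℝ => z * mW g d T z) z := by
  have hgd : 0 < g * d := mul_pos hg hd
  have hτ₀ : 0 ≤ T / (g * d ^ 2) := by linarith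
  have hphase {z : ℝ} (hz : 0 < z) : 0 < mW g d T z :=
    (sqrt_nonneg _).trans_lt (sqrt_mul_lt_mW hgd hτ hz)
  have hpos (z : ℝ) (hz : 0 < z) : 0 < deriv (deriv fun z ↦ z * mW g d T z) z := by
    rw [(hasDerivAt_deriv_mul_mW hgd hτ₀ hz).deriv]
    exact mul_pos (div_pos (hphase hz) hz) (groupPhaseRatio_riccati_pos hτ hz)
  refine ⟨if_pos rfl, strictMonoOn_of_deriv_pos (convex_Ioi 0) (fun z hz ↦ ?_)
    (by simpa only [interior_Ioi, Set.mem_Ioi] using hpos), fun z hz ↦ ?_, hpos⟩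
  · exact (hasDerivAt_deriv_mul_mW hgd hτ₀ hz).continuousAt.continuousWithinAt
  · rw [(hasDerivAt_mul_mW hgd hτ₀ hz).deriv]
    exact (sqrt_mul_lt_mW hgd hτ hz).trans
      (lt_mul_of_one_lt_right (hphase hz) (one_lt_groupPhaseRatio hτ hz))

/-- if `τ > 1/3`, the group velocity `z ↦ (z m(z))'` is strictly increasing
on `(0,∞)` and satisfies `(z m(z))' > m(0) = √(gd)` for every `z > 0`; in particular it
has no critical points on `(0,∞)` and never equals the long-wave phase speed `m(0)`. -/
theorem capillary_whitham_group_velocity_large_tension (g d T : ℝ)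
    (hg : 0 < g) (hd : 0 < d) (hT : 0 ≤ T) (hτ : 1 / 3 < T / (g * d ^ 2)) :
    mW g d T 0 = Real.sqrt (g * d) ∧
    StrictMonoOn (deriv fun z : ℝ => z * mW g d T z) (Set.Ioi 0) ∧
    ∀ z : ℝ, 0 < z → Real.sqrt (g * d) < deriv (fun z : ℝ => z * mW g d T z) z :=
  have ⟨hzero, hmono, hgt, _⟩ :=
    capillary_whitham_group_velocity_large_tension_general g d T hg hd hτ.le
  ⟨hzero, hmono, hgt⟩
end
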